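/- Let m ≥ 4 be an even integer, M₁ = {1,…,m/2} and M₂ = {m/2 + 1,…,m}. Let 𝒢 = {∅} ∪ 𝒯 ∪ 𝒰 be the family of subsets of [m] where 𝒯 consists of all 2-element subsets of M₁ together with all 2-element subsets of M₂, and 𝒰 consists of all 3-element sets {a, b, c} with a, b ∈ M₂ and c ∈ M₁, together with all 3-element sets {a, b, c} with a, b ∈ M₁ and c ∈ M₂. Then the number of full chains in Q_m containing exactly three members of 𝒢 is at least 4·C(m/2, 2)·(m/2)·(m − 3)!. -/

import Mathlib

/-!
Count full chains through permutations: `π` gives the chain of its initial segments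
`{π 0, …, π (k - 1)}`, and distinct permutations give distinct chains (`permChain_injective`).
Such a chain has exactly one member of each size, so it meets `𝒢` at most in its members of sizes
`0`, `2`, `3`; it meets `𝒢` in all three as soon as `π 0` and `π 1` lie in the same half and `π 2`
in the other one. With `h = m / 2` there are `2 * (h * (h - 1)) * h = 4 * C(h, 2) * h` admissible
triples `(π 0, π 1, π 2)`, and each of them extends to `(m - 3)!` permutations
(`card_perm_start`).
-/

/-- The set of full (maximal) chains in the Boolean lattice `Q_m`: families of `m + 1`
pairwise comparable subsets of `[m]` (hence of all sizes `0, 1, …, m`). -/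
def fullChains (m : ℕ) : Finset (Finset (Finset (Fin m))) :=
  Finset.univ.filter fun σ => σ.card = m + 1 ∧ ∀ A ∈ σ, ∀ B ∈ σ, A ⊆ B ∨ B ⊆ A

/-- The set of the first `k` values `π 0, …, π (k - 1)` of a permutation of `Fin m`. -/
def initSeg {m : ℕ} (π : Equiv.Perm (Fin m)) (k : ℕ) : Finset (Fin m) :=
  Finset.univ.filter fun x => (π.symm x).val < k

/-- The full chain of all initial segments of a permutation. -/
def permChain {m : ℕ} (π : Equiv.Perm (Fin m)) : Finset (Finset (Fin m)) :=
  (Finset.range (m + 1)).image (initSeg π)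

lemma mem_initSeg {m : ℕ} (π : Equiv.Perm (Fin m)) (k : ℕ) (x : Fin m) :
    x ∈ initSeg π k ↔ (π.symm x).val < k := by simp [initSeg]

lemma card_val_lt {m k : ℕ} (hk : k ≤ m) :
    (Finset.univ.filter fun x : Fin m => x.val < k).card = k := by
  rw [Fin.card_filter_val_lt]
  omega

lemma card_initSeg {m : ℕ} (π : Equiv.Perm (Fin m)) {k : ℕ} (hk : k ≤ m) :
    (initSeg π k).card = k := by
  have h : initSeg π k =
      (Finset.univ.filter fun x : Fin m => x.val < k).map π.toEmbedding := by
    ext x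
    simp [initSeg, Finset.mem_map_equiv]
  rw [h, Finset.card_map, card_val_lt hk]

lemma permChain_mem_fullChains {m : ℕ} (π : Equiv.Perm (Fin m)) :
    permChain π ∈ fullChains m := by
  simp only [fullChains, Finset.mem_filter, Finset.mem_univ, true_and]
  constructor
  · rw [permChain, Finset.card_image_of_injOn, Finset.card_range]
    intro i hi j hj hij
    simp only [Finset.coe_range, Set.mem_Iio] at hi hj
    rw [← card_initSeg π (Nat.lt_succ_iff.1 hi), ← card_initSeg π (Nat.lt_succ_iff.1 hj)]
    exact congrArg _ hij
  · intro A hA B hB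
    simp only [permChain, Finset.mem_image] at hA hB
    obtain ⟨i, -, rfl⟩ := hA
    obtain ⟨j, -, rfl⟩ := hB
    rcases le_total i j with h | h
    · left
      intro x hx
      rw [mem_initSeg] at *
      omega
    · right
      intro x hx
      rw [mem_initSeg] at *
      omega

lemma permChain_injective (m : ℕ) : Function.Injective (permChain (m := m)) := by
  intro π ρ h
  -- Both chains contain a single set of size `k`, so the initial segments agree.
  have key : ∀ k ≤ m, initSeg π k = initSeg ρ k := by
    intro k hk
    have hmem : initSeg π k ∈ permChain ρ := by
      rw [← h]
      exact Finset.mem_image_of_mem _ (Finset.mem_range.2 (by omega))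
    obtain ⟨j, hj, hjk⟩ := Finset.mem_image.1 hmem
    have hj' : j ≤ m := Nat.lt_succ_iff.1 (Finset.mem_range.1 hj)
    have : j = k := by rw [← card_initSeg ρ hj', hjk, card_initSeg π hk]
    rw [← hjk, this]
  have hs : π.symm = ρ.symm := by
    ext x
    have h1 := key ((π.symm x).val + 1) (by omega)
    have h2 := key ((ρ.symm x).val + 1) (by omega)
    have h3 : x ∈ initSeg ρ ((π.symm x).val + 1) := by
      rw [← h1, mem_initSeg]; omega
    have h4 : x ∈ initSeg π ((ρ.symm x).val + 1) := by
      rw [h2, mem_initSeg]; omega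
    rw [mem_initSeg] at h3 h4
    omega
  exact Equiv.symm_bijective.injective hs

/-- Any three distinct points are the images, in order, of any other three distinct points under
some permutation; it is built as a product of three transpositions. -/
lemma exists_perm_three {α : Type*} [DecidableEq α] {x y z a b c : α}
    (hxy : x ≠ y) (hxz : x ≠ z) (hyz : y ≠ z) (hab : a ≠ b) (hac : a ≠ c) (hbc : b ≠ c) :
    ∃ π : Equiv.Perm α, π x = a ∧ π y = b ∧ π z = c := by
  obtain ⟨f, hf⟩ : ∃ f : Equiv.Perm α, f x = a := ⟨Equiv.swap x a, by simp⟩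
  obtain ⟨g, hgx, hgy⟩ : ∃ g : Equiv.Perm α, g x = a ∧ g y = b := by
    refine ⟨Equiv.swap (f y) b * f, ?_, by simp⟩
    rw [Equiv.Perm.mul_apply, hf]
    exact Equiv.swap_apply_of_ne_of_ne (by rw [← hf]; exact f.injective.ne hxy) hab
  refine ⟨Equiv.swap (g z) c * g, ?_, ?_, by simp⟩
  · rw [Equiv.Perm.mul_apply, hgx]
    exact Equiv.swap_apply_of_ne_of_ne (by rw [← hgx]; exact g.injective.ne hxz) hac
  · rw [Equiv.Perm.mul_apply, hgy]
    exact Equiv.swap_apply_of_ne_of_ne (by rw [← hgy]; exact g.injective.ne hyz) hbc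

/-- If `D` consists of triples of distinct points, at least `|D| (m - 3)!` permutations start with
a triple from `D`: compose one such permutation per triple with the permutations of the positions
`3, …, m - 1`. -/
lemma card_perm_start {m : ℕ} (hm : 3 ≤ m) (D : Finset ((Fin m × Fin m) × Fin m))
    (hD : ∀ t ∈ D, t.1.1 ≠ t.1.2 ∧ t.1.1 ≠ t.2 ∧ t.1.2 ≠ t.2) :
    D.card * (m - 3).factorial ≤ (Finset.univ.filter fun π : Equiv.Perm (Fin m) =>
      ((π ⟨0, by omega⟩, π ⟨1, by omega⟩), π ⟨2, by omega⟩) ∈ D).card := by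
  have hex : ∀ t : (Fin m × Fin m) × Fin m, ∃ π : Equiv.Perm (Fin m), t ∈ D →
      π ⟨0, by omega⟩ = t.1.1 ∧ π ⟨1, by omega⟩ = t.1.2 ∧ π ⟨2, by omega⟩ = t.2 := by
    intro t
    by_cases ht : t ∈ D
    · obtain ⟨h1, h2, h3⟩ := hD t ht
      obtain ⟨π, hπ⟩ := exists_perm_three (x := (⟨0, by omega⟩ : Fin m)) (y := ⟨1, by omega⟩)
        (z := ⟨2, by omega⟩) (by simp) (by simp) (by simp) h1 h2 h3
      exact ⟨π, fun _ => hπ⟩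
    · exact ⟨1, fun h => absurd h ht⟩
  choose g hg using hex
  have hcard : Fintype.card (Equiv.Perm {x : Fin m // 3 ≤ x.val}) = (m - 3).factorial := by
    rw [Fintype.card_perm, Fintype.card_subtype]
    have h1 := Finset.card_filter_add_card_filter_not (s := (Finset.univ : Finset (Fin m)))
      (fun x => x.val < 3)
    rw [card_val_lt hm] at h1
    simp only [not_lt, Finset.card_univ, Fintype.card_fin] at h1
    congr 1
    omega
  have hfix : ∀ (ρ : Equiv.Perm {x : Fin m // 3 ≤ x.val}) (x : Fin m), x.val < 3 →
      Equiv.Perm.ofSubtype ρ x = x := fun ρ x hx =>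
    Equiv.Perm.ofSubtype_apply_of_not_mem ρ (by omega)
  rw [← hcard, ← Finset.card_univ, ← Finset.card_product]
  apply Finset.card_le_card_of_injOn (fun p => g p.1 * Equiv.Perm.ofSubtype p.2)
  · rintro ⟨t, ρ⟩ ht
    have ht' : t ∈ D := (Finset.mem_product.1 ht).1
    obtain ⟨h0, h1, h2⟩ := hg t ht'
    simp only [Finset.coe_filter, Finset.mem_univ, true_and, Set.mem_ofPred_eq,
      Equiv.Perm.mul_apply]
    rw [hfix ρ ⟨0, by omega⟩ (by simp), hfix ρ ⟨1, by omega⟩ (by simp),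
      hfix ρ ⟨2, by omega⟩ (by simp), h0, h1, h2]
    exact ht'
  · rintro ⟨t, ρ⟩ ht ⟨s, τ⟩ hs h
    have ht' : t ∈ D := (Finset.mem_product.1 ht).1
    have hs' : s ∈ D := (Finset.mem_product.1 hs).1
    obtain ⟨t0, t1, t2⟩ := hg t ht'
    obtain ⟨s0, s1, s2⟩ := hg s hs'
    simp only at h
    have hval : ∀ x : Fin m, x.val < 3 → g t x = g s x := by
      intro x hx
      have := congrArg (fun π : Equiv.Perm (Fin m) => π x) h
      simpa only [Equiv.Perm.mul_apply, hfix _ x hx] using this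
    have hts : t = s := by
      refine Prod.ext (Prod.ext ?_ ?_) ?_
      · rw [← t0, ← s0, hval _ (by simp)]
      · rw [← t1, ← s1, hval _ (by simp)]
      · rw [← t2, ← s2, hval _ (by simp)]
    subst hts
    rw [Equiv.Perm.ofSubtype_injective (mul_left_cancel h)]

/-- For even `m`, split `[m]` into `M₁` (first half) and `M₂` (second half), and let
`𝒢 = {∅} ∪ 𝒯 ∪ 𝒰` where `𝒯` consists of all 2-subsets of `M₁` and of `M₂`, and `𝒰`
of all 3-subsets with exactly one or exactly two elements in `M₁`.  Then at least
`4 C(m/2, 2) (m/2) (m-3)!` full chains contain exactly three members of `𝒢`. -/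
theorem lower_bound_construction (m : ℕ) (hm : 4 ≤ m) (heven : m % 2 = 0) :
    let M₁ : Finset (Fin m) := Finset.univ.filter fun x => Fin.val x < m / 2
    let M₂ : Finset (Fin m) := Finset.univ.filter fun x => m / 2 ≤ Fin.val x
    let 𝒯 : Finset (Finset (Fin m)) := M₁.powersetCard 2 ∪ M₂.powersetCard 2
    let 𝒰 : Finset (Finset (Fin m)) :=
      ((Finset.univ : Finset (Fin m)).powersetCard 3).filter fun W =>
        (W ∩ M₁).card = 1 ∨ (W ∩ M₁).card = 2
    let 𝒢 : Finset (Finset (Fin m)) := {∅} ∪ 𝒯 ∪ 𝒰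
    4 * (m / 2).choose 2 * (m / 2) * (m - 3).factorial
      ≤ ((fullChains m).filter fun σ => (σ ∩ 𝒢).card = 3).card := by
  intro M₁ M₂ 𝒯 𝒰 𝒢
  have mem1 : ∀ x, x ∈ M₁ ↔ x.val < m / 2 := fun x => by simp [M₁]
  have mem2 : ∀ x, x ∈ M₂ ↔ m / 2 ≤ x.val := fun x => by simp [M₂]
  have c1 : M₁.card = m / 2 := card_val_lt (by omega)
  have c2 : M₂.card = m / 2 := by
    have h1 := Finset.card_filter_add_card_filter_not (s := (Finset.univ : Finset (Fin m)))
      (fun x => x.val < m / 2)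
    simp only [not_lt, Finset.card_univ, Fintype.card_fin] at h1
    change M₁.card + M₂.card = m at h1
    omega
  set D : Finset ((Fin m × Fin m) × Fin m) :=
    M₁.offDiag ×ˢ M₂ ∪ M₂.offDiag ×ˢ M₁ with hDdef
  have memD : ∀ a b c, ((a, b), c) ∈ D ↔ a ≠ b ∧
      ((a ∈ M₁ ∧ b ∈ M₁ ∧ c ∈ M₂) ∨ (a ∈ M₂ ∧ b ∈ M₂ ∧ c ∈ M₁)) := by
    intro a b c
    simp only [hDdef, Finset.mem_union, Finset.mem_product, Finset.mem_offDiag]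
    tauto
  have cD : D.card = 4 * (m / 2).choose 2 * (m / 2) := by
    have hdisj : Disjoint (M₁.offDiag ×ˢ M₂) (M₂.offDiag ×ˢ M₁) := by
      rw [Finset.disjoint_left]
      rintro ⟨⟨a, b⟩, c⟩ h1 h2
      simp only [Finset.mem_product, mem1, mem2] at h1 h2
      omega
    rw [hDdef, Finset.card_union_of_disjoint hdisj, Finset.card_product, Finset.card_product,
      Finset.offDiag_card, Finset.offDiag_card, c1, c2]
    have h2 : m / 2 * (m / 2) - m / 2 = 2 * (m / 2).choose 2 := by
      rw [Nat.choose_two_right, Nat.two_mul_div_two_of_even (Nat.even_mul_pred_self _),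
        Nat.mul_sub_one]
    rw [h2]
    ring
  rw [← cD]
  refine (card_perm_start (by omega) D ?_).trans
    (Finset.card_le_card_of_injOn permChain ?_ (permChain_injective m).injOn)
  · rintro ⟨⟨a, b⟩, c⟩ h
    rw [memD] at h
    simp only [mem1, mem2] at h
    refine ⟨h.1, ?_, ?_⟩ <;> (dsimp only; rintro rfl; omega)
  intro π hπ
  simp only [Finset.coe_filter, Finset.mem_univ, true_and, Set.mem_ofPred_eq] at hπ ⊢
  rw [memD] at hπ
  refine ⟨permChain_mem_fullChains π, ?_⟩
  obtain ⟨-, hπ⟩ := hπ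
  have cs2 : (initSeg π 2).card = 2 := card_initSeg π (by omega)
  have cs3 : (initSeg π 3).card = 3 := card_initSeg π (by omega)
  have s0 : initSeg π 0 = ∅ := by ext x; simp [mem_initSeg]
  have seg2 : ∀ x, x ∈ initSeg π 2 ↔ x = π ⟨0, by omega⟩ ∨ x = π ⟨1, by omega⟩ := by
    intro x
    rw [mem_initSeg, ← Equiv.symm_apply_eq, ← Equiv.symm_apply_eq, Fin.ext_iff, Fin.ext_iff]
    simp only
    omega
  have seg3 : ∀ x, x ∈ initSeg π 3 ↔ x ∈ initSeg π 2 ∨ x = π ⟨2, by omega⟩ := by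
    intro x
    rw [mem_initSeg, mem_initSeg, ← Equiv.symm_apply_eq, Fin.ext_iff]
    simp only
    omega
  have hT : initSeg π 2 ∈ 𝒯 := by
    simp only [𝒯, Finset.mem_union, Finset.mem_powersetCard]
    rcases hπ with ⟨ha, hb, -⟩ | ⟨ha, hb, -⟩
    · refine Or.inl ⟨fun x hx => ?_, cs2⟩
      rcases (seg2 x).1 hx with rfl | rfl <;> assumption
    · refine Or.inr ⟨fun x hx => ?_, cs2⟩
      rcases (seg2 x).1 hx with rfl | rfl <;> assumption
  have hU : initSeg π 3 ∈ 𝒰 := by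
    simp only [𝒰, Finset.mem_filter, Finset.mem_powersetCard, Finset.subset_univ, true_and]
    refine ⟨cs3, ?_⟩
    have hdisj : ∀ x, x ∈ M₂ ↔ x ∉ M₁ := fun x => by rw [mem1, mem2]; omega
    simp only [hdisj] at hπ
    rcases hπ with ⟨ha, hb, hc⟩ | ⟨ha, hb, hc⟩
    · right
      have : initSeg π 3 ∩ M₁ = initSeg π 2 := by
        ext x
        rw [Finset.mem_inter, seg3, seg2]
        constructor
        · rintro ⟨h | rfl, hx⟩
          · exact h
          · exact absurd hx hc
        · rintro (rfl | rfl)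
          · exact ⟨Or.inl (Or.inl rfl), ha⟩
          · exact ⟨Or.inl (Or.inr rfl), hb⟩
      rw [this, cs2]
    · left
      rw [Finset.card_eq_one]
      refine ⟨π ⟨2, by omega⟩, ?_⟩
      ext x
      rw [Finset.mem_inter, seg3, seg2, Finset.mem_singleton]
      constructor
      · rintro ⟨(rfl | rfl) | h, hx⟩
        · exact absurd hx ha
        · exact absurd hx hb
        · exact h
      · rintro rfl
        exact ⟨Or.inr rfl, hc⟩
  have hmem : ∀ k ≤ m, initSeg π k ∈ permChain π := fun k hk =>
    Finset.mem_image_of_mem _ (Finset.mem_range.2 (by omega))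
  have hinter : permChain π ∩ 𝒢 = {initSeg π 0, initSeg π 2, initSeg π 3} := by
    ext A
    simp only [Finset.mem_inter, Finset.mem_insert, Finset.mem_singleton]
    constructor
    · rintro ⟨hA, hG⟩
      obtain ⟨k, hk, rfl⟩ := Finset.mem_image.1 hA
      have hck : (initSeg π k).card = k :=
        card_initSeg π (Nat.lt_succ_iff.1 (Finset.mem_range.1 hk))
      have hsize : k = 0 ∨ k = 2 ∨ k = 3 := by
        simp only [𝒢, 𝒯, 𝒰, Finset.mem_union, Finset.mem_singleton, Finset.mem_filter,
          Finset.mem_powersetCard, hck] at hG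
        rcases hG with (h | h) | h
        · left
          rw [← hck, h, Finset.card_empty]
        · omega
        · omega
      rcases hsize with rfl | rfl | rfl <;> simp
    · rintro (rfl | rfl | rfl)
      · exact ⟨hmem 0 (by omega), by simp [𝒢, s0]⟩
      · exact ⟨hmem 2 (by omega),
          Finset.mem_union_left _ (Finset.mem_union_right _ hT)⟩
      · exact ⟨hmem 3 (by omega), Finset.mem_union_right _ hU⟩
  rw [hinter, Finset.card_eq_three]
  have cs0 : (initSeg π 0).card = 0 := by rw [s0, Finset.card_empty]
  refine ⟨_, _, _, ?_, ?_, ?_, rfl⟩ <;> intro h <;> have := congrArg Finset.card h <;> omega
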